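/- arXiv:1812.00042 — 3 statements merged into one kernel-verified Lean document; each statement's English description precedes it below -/
import Mathlib

section
/- Let K be a field of characteristic zero and let A₁ = K⟨X, Y | YX − XY = 1⟩ be the first Weyl algebra. If P, Q ∈ A₁ satisfy m(P) ≤ 2 and m(Q) ≤ 2 and [P,Q] = PQ − QP = 1, then there exists a K-algebra automorphism τ of A₁ such that P = τ(Y) and Q = τ(X). -/
open Polynomial

noncomputable section

variable (K : Type) [Field K] [CharZero K]

/-- Defining relation of the first Weyl algebra: `Y*X = X*Y + 1`, i.e. `[Y,X] = 1`
(`true` encodes `X`, `false` encodes `Y`). -/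
inductive WeylRel : FreeAlgebra K Bool → FreeAlgebra K Bool → Prop
  | comm : WeylRel (FreeAlgebra.ι K false * FreeAlgebra.ι K true)
      (FreeAlgebra.ι K true * FreeAlgebra.ι K false + 1)

/-- The first Weyl algebra `A₁ = K⟨X,Y | YX - XY = 1⟩`. -/
abbrev Weyl : Type := RingQuot (WeylRel K)

/-- The generator `X` of the Weyl algebra. -/
def Wx : Weyl K := RingQuot.mkAlgHom K (WeylRel K) (FreeAlgebra.ι K true)

/-- The generator `Y` of the Weyl algebra. -/
def Wy : Weyl K := RingQuot.mkAlgHom K (WeylRel K) (FreeAlgebra.ι K false)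

/-- The element `H = Y*X`. -/
def WH : Weyl K := Wy K * Wx K

/-- `X^n` for `n ≥ 0` and `Y^{-n}` for `n < 0`. -/
def weight (n : ℤ) : Weyl K := if 0 ≤ n then Wx K ^ n.toNat else Wy K ^ (-n).toNat

/-- The `n`-th homogeneous component `A_{1,n}` of the `ℤ`-grading of the Weyl algebra:
`K[H]·Xⁿ` for `n ≥ 0` and `K[H]·Y^{-n}` for `n < 0`. -/
def component (n : ℤ) : Submodule K (Weyl K) :=
  LinearMap.range ((LinearMap.mulRight K (weight K n)).comp
    (Polynomial.aeval (WH K)).toLinearMap)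

/-!
`A₁` embeds into the skew Laurent ring `K[H][σ, σ⁻¹]`, and a homogeneous element `a` of weight `i`
has a leading monomial `X^(q + i) Y^q`; write `q(a)` for its exponent `q`. If `a` and `b` have
weights `i` and `k`, the expected leading coefficient of `[a, b]` is a nonzero multiple of
`k q(a) - i q(b)`. Hence either this determinant vanishes or `q([a, b]) = q(a) + q(b) - 1`, and it
vanishes whenever `a` and `b` commute.

Write `P = a + b` and `Q = c + d` with homogeneous summands. By weights, up to swapping `c` and `d`,
`[a, c] + [b, d] = 1` and `[a, d] + [b, c] = 0`. If `[b, d] = 0`, then `[a, c] = 1` forces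
`(a, c)`, up to rotation, to be `(α Y, α⁻¹ X)`; the degree formula then makes `b` a polynomial in
`X` and `d` a polynomial in `Y`, one of them constant, so `(P, Q)` is obtained by a shear. If both
`[a, c]` and `[b, d]` are nonzero, the degree formula makes the weights of `a` and `b` opposite and
`d` a multiple `r a` of `a`, and subtracting `r P` from `Q` leads back to the first case.
-/

attribute [local instance] LieRing.ofAssociativeRing

/-! ### Polynomials in an element of an algebra -/

section Aeval

variable {R A : Type*} [CommRing R] [Ring A] [Algebra R A]

theorem aeval_taylor (a : A) (r : R) (f : R[X]) :
    aeval a (taylor r f) = aeval (a + algebraMap R A r) f := by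
  rw [taylor_apply, aeval_comp, map_add, aeval_X, aeval_C]

theorem aeval_semiconj {x a b : A} (h : SemiconjBy x a b)
    (f : R[X]) : SemiconjBy x (aeval a f) (aeval b f) := by
  induction f using Polynomial.induction_on' with
  | add p q hp hq => simpa only [map_add] using hp.add_right hq
  | monomial n c =>
    have hc : SemiconjBy x (algebraMap R A c) (algebraMap R A c) := (Algebra.commutes c x).symm
    simpa only [aeval_monomial] using hc.mul_right (h.pow_right n)

end Aeval

/-! ### Twisted brackets of polynomials -/

section TwistedBracket

variable {R : Type*} [CommRing R]

theorem natDegree_sub_taylor_le (r : R) (p : R[X]) :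
    (p - taylor r p).natDegree ≤ p.natDegree - 1 := by
  refine natDegree_le_iff_coeff_eq_zero.2 fun n hn => ?_
  rcases (show p.natDegree ≤ n by omega).eq_or_lt with rfl | hlt
  · rw [coeff_sub, coeff_taylor_natDegree, coeff_natDegree, sub_self]
  · rw [coeff_sub, coeff_eq_zero_of_natDegree_lt hlt,
      coeff_eq_zero_of_natDegree_lt (by rwa [natDegree_taylor]), sub_self]

theorem coeff_sub_taylor (r : R) (p : R[X]) :
    (p - taylor r p).coeff (p.natDegree - 1) = -(r * p.natDegree * p.leadingCoeff) := by
  rcases hp : p.natDegree with _ | n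
  · rw [eq_C_of_natDegree_eq_zero hp]
    simp
  · have hlin : (hasseDeriv n p).natDegree ≤ 1 := by
      have := natDegree_hasseDeriv_le p n
      omega
    rw [coeff_sub, taylor_coeff, Nat.add_sub_cancel, eq_X_add_C_of_natDegree_le_one hlin,
      leadingCoeff, hp]
    simp only [hasseDeriv_coeff, eval_add, eval_mul, eval_C, eval_X, zero_add, Nat.choose_self,
      add_comm 1 n, Nat.choose_succ_self_right]
    push_cast
    ring

theorem natDegree_mul_sub_taylor_le (r : R) (p q : R[X]) :
    (q * (p - taylor r p)).natDegree ≤ p.natDegree + q.natDegree - 1 := by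
  rcases Nat.eq_zero_or_pos p.natDegree with hp | hp
  · rw [eq_C_of_natDegree_eq_zero hp]
    simp
  · have hmul := natDegree_mul_le (p := q) (q := p - taylor r p)
    have := natDegree_sub_taylor_le r p
    omega

theorem coeff_mul_sub_taylor (r : R) (p q : R[X]) :
    (q * (p - taylor r p)).coeff (p.natDegree + q.natDegree - 1) =
      -(r * p.natDegree * (p.leadingCoeff * q.leadingCoeff)) := by
  rcases Nat.eq_zero_or_pos p.natDegree with hp | hp
  · rw [eq_C_of_natDegree_eq_zero hp]
    simp
  · rw [show p.natDegree + q.natDegree - 1 = q.natDegree + (p.natDegree - 1) by omega,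
      coeff_mul_add_eq_of_natDegree_le le_rfl (natDegree_sub_taylor_le r p), coeff_sub_taylor,
      coeff_natDegree]
    ring

/-- The coefficient `p σ^i(q) - q σ^k(p)` of the commutator of `p σ^i` and `q σ^k` in a skew
Laurent ring over `R[X]`, where `σ^i` and `σ^k` translate the variable by `r` and `s`. -/
def twistedBracket (r s : R) (p q : R[X]) : R[X] := p * taylor r q - q * taylor s p

theorem twistedBracket_eq (r s : R) (p q : R[X]) :
    twistedBracket r s p q = q * (p - taylor s p) - p * (q - taylor r q) := by
  rw [twistedBracket]
  ring

theorem natDegree_twistedBracket_le (r s : R) (p q : R[X]) :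
    (twistedBracket r s p q).natDegree ≤ p.natDegree + q.natDegree - 1 := by
  rw [twistedBracket_eq]
  refine (natDegree_sub_le _ _).trans (max_le (natDegree_mul_sub_taylor_le s p q) ?_)
  simpa only [add_comm] using natDegree_mul_sub_taylor_le r q p

theorem coeff_twistedBracket (r s : R) (p q : R[X]) :
    (twistedBracket r s p q).coeff (p.natDegree + q.natDegree - 1) =
      (r * q.natDegree - s * p.natDegree) * (p.leadingCoeff * q.leadingCoeff) := by
  have hqp := coeff_mul_sub_taylor r q p
  rw [add_comm q.natDegree] at hqp
  rw [twistedBracket_eq, coeff_sub, coeff_mul_sub_taylor, hqp]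
  ring

variable [IsDomain R] {r s : R} {p q : R[X]}

theorem coeff_twistedBracket_ne_zero (hp : p ≠ 0) (hq : q ≠ 0)
    (h : r * q.natDegree ≠ s * p.natDegree) :
    (twistedBracket r s p q).coeff (p.natDegree + q.natDegree - 1) ≠ 0 := by
  rw [coeff_twistedBracket]
  exact mul_ne_zero (sub_ne_zero.2 h)
    (mul_ne_zero (leadingCoeff_ne_zero.2 hp) (leadingCoeff_ne_zero.2 hq))

theorem natDegree_twistedBracket (hp : p ≠ 0) (hq : q ≠ 0)
    (h : r * q.natDegree ≠ s * p.natDegree) :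
    (twistedBracket r s p q).natDegree = p.natDegree + q.natDegree - 1 :=
  (natDegree_twistedBracket_le r s p q).antisymm
    (le_natDegree_of_ne_zero (coeff_twistedBracket_ne_zero hp hq h))

theorem mul_natDegree_eq_of_twistedBracket_eq_zero (hp : p ≠ 0) (hq : q ≠ 0)
    (h : twistedBracket r s p q = 0) : r * q.natDegree = s * p.natDegree := by
  by_contra hne
  exact coeff_twistedBracket_ne_zero hp hq hne (by rw [h, coeff_zero])

end TwistedBracket

variable {K}

namespace Weyl

section

omit [CharZero K]

variable {B : Type*} [Ring B] [Algebra K B]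

theorem lie_Y_X : ⁅Wy K, Wx K⁆ = 1 := by
  have h := RingQuot.mkAlgHom_rel K (WeylRel.comm (K := K))
  rw [Ring.lie_def, sub_eq_iff_eq_add']
  simpa [Wx, Wy] using h

theorem Y_mul_X : Wy K * Wx K = Wx K * Wy K + 1 :=
  sub_eq_iff_eq_add'.1 lie_Y_X

theorem smul_lie (c : K) (x y : Weyl K) : ⁅c • x, y⁆ = c • ⁅x, y⁆ := by
  rw [Ring.lie_def, Ring.lie_def, smul_mul_assoc, mul_smul_comm, smul_sub]

theorem lie_smul (c : K) (x y : Weyl K) : ⁅x, c • y⁆ = c • ⁅x, y⁆ := by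
  rw [Ring.lie_def, Ring.lie_def, smul_mul_assoc, mul_smul_comm, smul_sub]

/-- The universal property of `A₁`: elements `x, y` with `[y, x] = 1` are the images of
`X` and `Y` under an algebra map. -/
def lift (x y : B) (h : ⁅y, x⁆ = 1) : Weyl K →ₐ[K] B :=
  RingQuot.liftAlgHom K ⟨FreeAlgebra.lift K fun b : Bool => if b then x else y, by
    rintro _ _ ⟨⟩
    simpa using sub_eq_iff_eq_add'.1 h⟩

@[simp]
theorem lift_X (x y : B) (h : ⁅y, x⁆ = 1) : lift (K := K) x y h (Wx K) = x := by
  simp [lift, Wx]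

@[simp]
theorem lift_Y (x y : B) (h : ⁅y, x⁆ = 1) : lift (K := K) x y h (Wy K) = y := by
  simp [lift, Wy]

theorem algHom_ext {f g : Weyl K →ₐ[K] B} (hX : f (Wx K) = g (Wx K))
    (hY : f (Wy K) = g (Wy K)) : f = g := by
  refine RingQuot.ringQuot_ext' K f g (FreeAlgebra.hom_ext (funext fun b => ?_))
  cases b
  · exact hY
  · exact hX

/-! ### Coordinate pairs -/

/-- `P` and `Q` are the images of `Y` and `X` under an automorphism of `A₁`. -/
def IsCoordinatePair (P Q : Weyl K) : Prop :=
  ∃ τ : Weyl K ≃ₐ[K] Weyl K, P = τ (Wy K) ∧ Q = τ (Wx K)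

namespace IsCoordinatePair

theorem Y_X : IsCoordinatePair (Wy K) (Wx K) :=
  ⟨AlgEquiv.refl, rfl, rfl⟩

theorem of_inverse {x y x' y' : Weyl K} (h : ⁅y, x⁆ = 1) (h' : ⁅y', x'⁆ = 1)
    (hX : lift (K := K) x y h x' = Wx K) (hY : lift (K := K) x y h y' = Wy K)
    (hX' : lift (K := K) x' y' h' x = Wx K) (hY' : lift (K := K) x' y' h' y = Wy K) :
    IsCoordinatePair y x := by
  refine ⟨AlgEquiv.ofAlgHom (lift x y h) (lift x' y' h') (algHom_ext ?_ ?_) (algHom_ext ?_ ?_),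
    ?_, ?_⟩ <;> simp [hX, hY, hX', hY']

theorem map {P Q : Weyl K} (h : IsCoordinatePair P Q) (τ : Weyl K ≃ₐ[K] Weyl K) :
    IsCoordinatePair (τ P) (τ Q) := by
  obtain ⟨σ, rfl, rfl⟩ := h
  exact ⟨σ.trans τ, rfl, rfl⟩

theorem rotate {P Q : Weyl K} (h : IsCoordinatePair P Q) : IsCoordinatePair Q (-P) := by
  have hXY : IsCoordinatePair (Wx K) (-Wy K) :=
    of_inverse (x' := Wy K) (y' := -Wx K) (by rw [lie_neg, lie_skew, lie_Y_X])
      (by rw [neg_lie, lie_skew, lie_Y_X]) (by simp) (by simp) (by simp) (by simp)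
  obtain ⟨τ, rfl, rfl⟩ := h
  simpa using hXY.map τ

theorem rotate_iff {P Q : Weyl K} : IsCoordinatePair Q (-P) ↔ IsCoordinatePair P Q :=
  ⟨fun h => by simpa using h.rotate.rotate.rotate, rotate⟩

theorem add_left {P Q x : Weyl K} (h : IsCoordinatePair P Q) (hx : x ∈ Algebra.adjoin K {Q}) :
    IsCoordinatePair (P + x) Q := by
  rw [Algebra.adjoin_singleton_eq_range_aeval] at hx
  obtain ⟨p, rfl⟩ := hx
  have hcomm : ⁅aeval (Wx K) p, Wx K⁆ = 0 :=
    commute_iff_lie_eq.1 (by simpa using (Commute.all p X).map (aeval (Wx K)))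
  have hshear : IsCoordinatePair (Wy K + aeval (Wx K) p) (Wx K) :=
    of_inverse (x' := Wx K) (y' := Wy K - aeval (Wx K) p)
      (by rw [add_lie, hcomm, lie_Y_X, add_zero]) (by rw [sub_lie, hcomm, lie_Y_X, sub_zero])
      (by simp) (by simp [← aeval_algHom_apply]) (by simp) (by simp [← aeval_algHom_apply])
  obtain ⟨τ, rfl, rfl⟩ := h
  simpa [aeval_algHom_apply] using hshear.map τ

theorem add_right {P Q x : Weyl K} (h : IsCoordinatePair P Q) (hx : x ∈ Algebra.adjoin K {P}) :
    IsCoordinatePair P (Q + x) := by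
  have hrot := h.rotate.rotate.rotate.add_left (x := -x) (by simpa using hx)
  simpa [add_comm] using hrot.rotate

theorem smul {P Q : Weyl K} (h : IsCoordinatePair P Q) {α β : K} (hαβ : α * β = 1) :
    IsCoordinatePair (α • P) (β • Q) := by
  have hβα : β * α = 1 := by rw [mul_comm, hαβ]
  have hscale : IsCoordinatePair (α • Wy K) (β • Wx K) :=
    of_inverse (x' := α • Wx K) (y' := β • Wy K)
      (by rw [smul_lie, lie_smul, lie_Y_X, smul_smul, hαβ, one_smul])
      (by rw [smul_lie, lie_smul, lie_Y_X, smul_smul, hβα, one_smul])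
      (by simp [smul_smul, hαβ]) (by simp [smul_smul, hβα])
      (by simp [smul_smul, hβα]) (by simp [smul_smul, hαβ])
  obtain ⟨τ, rfl, rfl⟩ := h
  simpa using hscale.map τ

end IsCoordinatePair

/-! ### The grading -/

theorem X_mul_aeval_H (f : K[X]) :
    Wx K * aeval (WH K) f = aeval (WH K) (taylor (-1) f) * Wx K := by
  rw [aeval_taylor]
  refine aeval_semiconj ?_ f
  rw [SemiconjBy, WH, map_neg, map_one, ← mul_assoc, Y_mul_X, add_neg_cancel_right]

theorem Y_mul_aeval_H (f : K[X]) :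
    Wy K * aeval (WH K) f = aeval (WH K) (taylor 1 f) * Wy K := by
  rw [aeval_taylor]
  refine aeval_semiconj ?_ f
  rw [SemiconjBy, WH, map_one, add_one_mul, mul_assoc, ← mul_add_one, ← Y_mul_X]

theorem mem_component {i : ℤ} {a : Weyl K} :
    a ∈ component K i ↔ ∃ f : K[X], aeval (WH K) f * weight K i = a := by
  simp [component]

theorem aeval_H_mul_mem_component {i : ℤ} {a : Weyl K} (ha : a ∈ component K i) (f : K[X]) :
    aeval (WH K) f * a ∈ component K i := by
  obtain ⟨g, rfl⟩ := mem_component.1 ha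
  exact mem_component.2 ⟨f * g, by rw [map_mul, mul_assoc]⟩

theorem weight_natCast (n : ℕ) : weight K n = Wx K ^ n := by
  simp [weight]

theorem weight_neg_natCast (n : ℕ) : weight K (-n) = Wy K ^ n := by
  rcases n with _ | n
  · simp [weight]
  · rw [weight, if_neg (by omega), neg_neg, Int.toNat_natCast]

theorem X_mul_weight_mem_component (i : ℤ) : Wx K * weight K i ∈ component K (i + 1) := by
  obtain ⟨n, rfl | rfl⟩ := i.eq_nat_or_neg
  · refine mem_component.2 ⟨1, ?_⟩
    rw [map_one, one_mul, weight_natCast, ← pow_succ', ← weight_natCast, Nat.cast_succ]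
  · rcases n with _ | n
    · exact mem_component.2 ⟨1, by simp [weight]⟩
    · refine mem_component.2 ⟨X - 1, ?_⟩
      rw [show -((n + 1 : ℕ) : ℤ) + 1 = -n by push_cast; ring, weight_neg_natCast,
        weight_neg_natCast, map_sub, aeval_X, map_one, WH, Y_mul_X, add_sub_cancel_right,
        mul_assoc, pow_succ']

theorem Y_mul_weight_mem_component (i : ℤ) : Wy K * weight K i ∈ component K (i - 1) := by
  obtain ⟨n, rfl | rfl⟩ := i.eq_nat_or_neg
  · rcases n with _ | n
    · exact mem_component.2 ⟨1, by simp [weight]⟩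
    · refine mem_component.2 ⟨X, ?_⟩
      rw [show ((n + 1 : ℕ) : ℤ) - 1 = n by push_cast; ring, weight_natCast, weight_natCast,
        aeval_X, WH, mul_assoc, pow_succ']
  · refine mem_component.2 ⟨1, ?_⟩
    rw [map_one, one_mul, weight_neg_natCast, ← pow_succ', ← weight_neg_natCast, Nat.cast_succ,
      neg_add']

theorem X_mul_mem_component {i : ℤ} {a : Weyl K} (ha : a ∈ component K i) :
    Wx K * a ∈ component K (i + 1) := by
  obtain ⟨f, rfl⟩ := mem_component.1 ha
  rw [← mul_assoc, X_mul_aeval_H, mul_assoc]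
  exact aeval_H_mul_mem_component (X_mul_weight_mem_component i) _

theorem Y_mul_mem_component {i : ℤ} {a : Weyl K} (ha : a ∈ component K i) :
    Wy K * a ∈ component K (i - 1) := by
  obtain ⟨f, rfl⟩ := mem_component.1 ha
  rw [← mul_assoc, Y_mul_aeval_H, mul_assoc]
  exact aeval_H_mul_mem_component (Y_mul_weight_mem_component i) _

theorem mul_mem_iSup_component {a s : Weyl K} (hs : s ∈ ⨆ i, component K i) :
    a * s ∈ ⨆ i, component K i := by
  obtain ⟨p, rfl⟩ := RingQuot.mkAlgHom_surjective K (WeylRel K) a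
  induction p generalizing s with
  | grade0 c =>
    rw [AlgHom.commutes, ← Algebra.smul_def]
    exact Submodule.smul_mem _ c hs
  | grade1 b =>
    induction hs using Submodule.iSup_induction' with
    | mem i x hx =>
      cases b
      · exact Submodule.mem_iSup_of_mem _ (Y_mul_mem_component hx)
      · exact Submodule.mem_iSup_of_mem _ (X_mul_mem_component hx)
    | zero => rw [mul_zero]; exact zero_mem _
    | add x y _ _ hx hy => rw [mul_add]; exact add_mem hx hy
  | mul p q hp hq => rw [map_mul, mul_assoc]; exact hp (hq hs)
  | add p q hp hq => rw [map_add, add_mul]; exact add_mem (hp hs) (hq hs)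

theorem iSup_component_eq_top : ⨆ i, component K i = ⊤ := by
  have hone : (1 : Weyl K) ∈ ⨆ i, component K i :=
    Submodule.mem_iSup_of_mem 0 (mem_component.2 ⟨1, by simp [weight]⟩)
  exact eq_top_iff.2 fun a _ => by simpa using mul_mem_iSup_component (a := a) hone

/-! ### The embedding into the skew Laurent ring -/

/-- The skew Laurent monomial `p σⁱ`, where `σ` is the translation `X ↦ X - 1`, realised as an
operator on sequences of polynomials: `σ` translates the entries and shifts the sequence. -/
def skewMonomial (i : ℤ) : K[X] →ₗ[K] Module.End K (ℤ → K[X]) :=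
  LinearMap.mk₂ K (fun p φ n => p * taylor (-(i : K)) (φ (n - i)))
    (fun p q φ => funext fun n => add_mul p q _)
    (fun c p φ => funext fun n => smul_mul_assoc c p _)
    (fun p φ ψ => funext fun n => by simp [mul_add])
    (fun c p φ => funext fun n => by simp)

theorem skewMonomial_apply (i : ℤ) (p : K[X]) (φ : ℤ → K[X]) (n : ℤ) :
    skewMonomial i p φ n = p * taylor (-(i : K)) (φ (n - i)) := rfl

theorem skewMonomial_mul (i k : ℤ) (p q : K[X]) :
    skewMonomial i p * skewMonomial k q = skewMonomial (i + k) (p * taylor (-(i : K)) q) := by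
  ext1 φ
  funext n
  simp only [Module.End.mul_apply, skewMonomial_apply, taylor_mul, taylor_taylor, mul_assoc,
    Int.cast_add, neg_add, sub_sub]

theorem skewMonomial_zero_one : skewMonomial 0 (1 : K[X]) = 1 := by
  ext1 φ
  funext n
  simp [skewMonomial_apply]

theorem lie_skewMonomial (i k : ℤ) (p q : K[X]) :
    ⁅skewMonomial i p, skewMonomial k q⁆ =
      skewMonomial (i + k) (twistedBracket (-(i : K)) (-(k : K)) p q) := by
  rw [Ring.lie_def, skewMonomial_mul, skewMonomial_mul, add_comm k, ← map_sub,
    twistedBracket]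

theorem skewMonomial_single (i : ℤ) (p : K[X]) :
    skewMonomial i p (Pi.single 0 1) = Pi.single i p := by
  funext n
  rcases eq_or_ne n i with rfl | hn
  · simp [skewMonomial_apply]
  · simp [skewMonomial_apply, Pi.single_eq_of_ne hn, Pi.single_eq_of_ne (sub_ne_zero.2 hn)]

/-- The embedding `X ↦ σ`, `Y ↦ H σ⁻¹` of `A₁` into the skew Laurent ring `K[H][σ, σ⁻¹]`. -/
def skewRep : Weyl K →ₐ[K] Module.End K (ℤ → K[X]) :=
  lift (skewMonomial 1 1) (skewMonomial (-1) X) (by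
    rw [lie_skewMonomial, ← skewMonomial_zero_one]
    simp [twistedBracket])

instance : Nontrivial (Weyl K) := (skewRep (K := K)).toRingHom.domain_nontrivial

theorem skewRep_aeval_H (f : K[X]) : skewRep (aeval (WH K) f) = skewMonomial 0 f := by
  have hH : skewRep (WH K) = skewMonomial 0 X := by
    simp [skewRep, WH, skewMonomial_mul]
  induction f using Polynomial.induction_on with
  | C c =>
    rw [aeval_C, AlgHom.commutes, Algebra.algebraMap_eq_smul_one, ← skewMonomial_zero_one,
      ← map_smul, smul_eq_C_mul, mul_one]
  | add p q hp hq => rw [map_add, map_add, map_add, hp, hq]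
  | monomial n c h =>
    rw [pow_succ, ← mul_assoc, map_mul, map_mul, h, aeval_X, hH, skewMonomial_mul]
    simp

theorem skewRep_X_pow (n : ℕ) : skewRep (Wx K ^ n) = skewMonomial n 1 := by
  induction n with
  | zero => simp [skewMonomial_zero_one]
  | succ n ih =>
    rw [pow_succ, map_mul, ih, skewRep, lift_X, skewMonomial_mul, taylor_one, map_one, mul_one,
      Nat.cast_succ]

theorem skewRep_Y_pow (n : ℕ) : skewRep (Wy K ^ n) = skewMonomial (-n) (ascPochhammer K n) := by
  induction n with
  | zero => simp [skewMonomial_zero_one]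
  | succ n ih =>
    rw [pow_succ, map_mul, ih, skewRep, lift_Y, skewMonomial_mul, taylor_X,
      ascPochhammer_succ_right, Nat.cast_succ]
    simp only [Int.cast_neg, Int.cast_natCast, neg_neg, map_natCast, neg_add]

theorem skewRep_weight (i : ℤ) :
    skewRep (weight K i) = skewMonomial i (ascPochhammer K (-i).toNat) := by
  obtain ⟨n, rfl | rfl⟩ := i.eq_nat_or_neg
  · simp [weight_natCast, skewRep_X_pow]
  · simp [weight_neg_natCast, skewRep_Y_pow]

theorem skewRep_aeval_H_mul_weight (i : ℤ) (f : K[X]) :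
    skewRep (aeval (WH K) f * weight K i) =
      skewMonomial i (f * ascPochhammer K (-i).toNat) := by
  simp [skewRep_aeval_H, skewRep_weight, skewMonomial_mul]

/-- The coefficients of the powers of `σ` in the image of an element of `A₁` under `skewRep`. -/
def symbol : Weyl K →ₗ[K] (ℤ → K[X]) :=
  LinearMap.applyₗ (Pi.single 0 1) ∘ₗ skewRep.toLinearMap

theorem symbol_eq (a : Weyl K) : symbol a = skewRep a (Pi.single 0 1) := rfl

theorem symbol_aeval_H_mul_weight (i : ℤ) (f : K[X]) :
    symbol (aeval (WH K) f * weight K i) = Pi.single i (f * ascPochhammer K (-i).toNat) := by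
  rw [symbol_eq, skewRep_aeval_H_mul_weight, skewMonomial_single]

theorem symbol_one : symbol (1 : Weyl K) = Pi.single 0 1 := by
  rw [symbol_eq, map_one, Module.End.one_apply]

variable {i j k l : ℤ} {a b c d : Weyl K}

theorem symbol_of_mem (ha : a ∈ component K i) : symbol a = Pi.single i (symbol a i) := by
  obtain ⟨f, rfl⟩ := mem_component.1 ha
  rw [symbol_aeval_H_mul_weight, Pi.single_eq_same]

theorem skewRep_of_mem (ha : a ∈ component K i) : skewRep a = skewMonomial i (symbol a i) := by
  obtain ⟨f, rfl⟩ := mem_component.1 ha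
  rw [skewRep_aeval_H_mul_weight, symbol_aeval_H_mul_weight, Pi.single_eq_same]

theorem symbol_lie (ha : a ∈ component K i) (hb : b ∈ component K k) :
    symbol ⁅a, b⁆ =
      Pi.single (i + k) (twistedBracket (-(i : K)) (-(k : K)) (symbol a i) (symbol b k)) := by
  rw [← skewMonomial_single, ← lie_skewMonomial, ← skewRep_of_mem ha, ← skewRep_of_mem hb,
    symbol_eq, Ring.lie_def, Ring.lie_def, map_sub, map_mul, map_mul]

theorem eq_zero_of_mem_of_symbol_eq_zero (ha : a ∈ component K i) (h : symbol a i = 0) :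
    a = 0 := by
  obtain ⟨f, rfl⟩ := mem_component.1 ha
  rw [symbol_aeval_H_mul_weight, Pi.single_eq_same] at h
  rw [(mul_eq_zero.1 h).resolve_right (monic_ascPochhammer K _).ne_zero, map_zero, zero_mul]

theorem symbol_injective : Function.Injective (symbol (K := K)) := by
  refine (injective_iff_map_eq_zero symbol).2 fun a ha => ?_
  have htop : a ∈ ⨆ i, component K i := iSup_component_eq_top (K := K) ▸ Submodule.mem_top
  obtain ⟨x, hx, rfl⟩ := (Submodule.mem_iSup_iff_exists_finsupp (component K) a).1 htop
  refine Finset.sum_eq_zero fun i _ => eq_zero_of_mem_of_symbol_eq_zero (hx i) ?_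
  have hi : symbol (x.sum fun _ y => y) i = symbol (x i) i := by
    rw [Finsupp.sum, map_sum, Finset.sum_apply, Finset.sum_eq_single i]
    · intro k _ hk
      rw [symbol_of_mem (hx k), Pi.single_eq_of_ne hk.symm]
    · intro hi
      rw [Finsupp.notMem_support_iff.1 hi, map_zero, Pi.zero_apply]
  rw [← hi, ha, Pi.zero_apply]

theorem symbol_lie_of_ne (ha : a ∈ component K i) (hb : b ∈ component K k) {n : ℤ}
    (hn : n ≠ i + k) : symbol ⁅a, b⁆ n = 0 := by
  rw [symbol_lie ha hb, Pi.single_eq_of_ne hn]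

theorem eq_zero_or_eq_zero_of_add_eq_one {u v : Weyl K} (h : u + v = 1)
    (hdisj : ∀ n, symbol u n = 0 ∨ symbol v n = 0) : u = 0 ∨ v = 0 := by
  have hsum (n : ℤ) : symbol u n + symbol v n = symbol (1 : Weyl K) n := by
    rw [← h, map_add, Pi.add_apply]
  have hoff {n : ℤ} (hn : n ≠ 0) : symbol u n = 0 ∧ symbol v n = 0 := by
    have := hsum n
    rw [symbol_one, Pi.single_eq_of_ne hn] at this
    rcases hdisj n with h | h <;> simp_all
  refine (hdisj 0).imp (fun h0 => ?_) (fun h0 => ?_) <;>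
    refine symbol_injective (funext fun n => ?_) <;>
    rcases eq_or_ne n 0 with rfl | hn <;> simp [*]

theorem eq_zero_of_add_eq_zero {u v : Weyl K} (h : u + v = 0)
    (hdisj : ∀ n, symbol u n = 0 ∨ symbol v n = 0) : u = 0 := by
  refine symbol_injective (funext fun n => ?_)
  rw [map_zero, Pi.zero_apply]
  refine (hdisj n).elim id fun hv => ?_
  rw [eq_neg_of_add_eq_zero_left h, map_neg, Pi.neg_apply, hv, neg_zero]

theorem symbol_lie_ne_zero (ha : a ∈ component K i) (hb : b ∈ component K k)
    (h : ⁅a, b⁆ ≠ 0) : symbol ⁅a, b⁆ (i + k) ≠ 0 := by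
  refine fun h0 => h (symbol_injective (funext fun n => ?_))
  rw [map_zero, Pi.zero_apply]
  rcases eq_or_ne n (i + k) with rfl | hn
  · exact h0
  · exact symbol_lie_of_ne ha hb hn

theorem add_eq_add_of_lie_eq_lie (ha : a ∈ component K i)
    (hb : b ∈ component K k) (hc : c ∈ component K j) (hd : d ∈ component K l)
    (h : ⁅a, b⁆ = ⁅c, d⁆) (h0 : ⁅a, b⁆ ≠ 0) : i + k = j + l := by
  by_contra hne
  refine symbol_lie_ne_zero ha hb h0 ?_
  rw [h, symbol_lie_of_ne hc hd hne]

theorem add_eq_zero_of_lie_add_lie_eq_one (ha : a ∈ component K i) (hb : b ∈ component K j)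
    (hc : c ∈ component K k) (hd : d ∈ component K l) (h : ⁅a, c⁆ + ⁅b, d⁆ = 1)
    (hac : ⁅a, c⁆ ≠ 0) : i + k = 0 := by
  by_contra hne
  have hsum (n : ℤ) : symbol ⁅a, c⁆ n + symbol ⁅b, d⁆ n = symbol (1 : Weyl K) n := by
    rw [← h, map_add, Pi.add_apply]
  have hjl : i + k = j + l := by
    by_contra hjl
    refine symbol_lie_ne_zero ha hc hac ?_
    simpa [symbol_lie_of_ne hb hd hjl, symbol_one, Pi.single_eq_of_ne hne] using hsum (i + k)
  have h0 := hsum 0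
  rw [symbol_lie_of_ne ha hc (Ne.symm hne), symbol_lie_of_ne hb hd (hjl ▸ Ne.symm hne),
    symbol_one] at h0
  simp at h0

theorem symbol_lie_add_lie_eq_zero_or (hij : i ≠ j) (hkl : k ≠ l) (ha : a ∈ component K i)
    (hb : b ∈ component K j) (hc : c ∈ component K k) (hd : d ∈ component K l) (n : ℤ) :
    symbol (⁅a, c⁆ + ⁅b, d⁆) n = 0 ∨ symbol (⁅a, d⁆ + ⁅b, c⁆) n = 0 := by
  by_cases hn : n = i + k ∨ n = j + l
  · right
    rw [map_add, Pi.add_apply, symbol_lie_of_ne ha hd (by omega),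
      symbol_lie_of_ne hb hc (by omega), add_zero]
  · left
    rw [map_add, Pi.add_apply, symbol_lie_of_ne ha hc (by omega),
      symbol_lie_of_ne hb hd (by omega), add_zero]

/-! ### Degrees of homogeneous elements -/

/-- The exponent `q` of the leading monomial `X^(q + i) Y^q` of a homogeneous element of
weight `i`. -/
def yDegree (i : ℤ) (a : Weyl K) : ℕ := (symbol a i).natDegree

theorem symbol_ne_zero (ha : a ∈ component K i) (ha0 : a ≠ 0) : symbol a i ≠ 0 :=
  fun h => ha0 (eq_zero_of_mem_of_symbol_eq_zero ha h)

theorem yDegree_aeval_H_mul_weight {f : K[X]} (hf : f ≠ 0) :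
    yDegree i (aeval (WH K) f * weight K i) = f.natDegree + (-i).toNat := by
  rw [yDegree, symbol_aeval_H_mul_weight, Pi.single_eq_same,
    natDegree_mul hf (monic_ascPochhammer K _).ne_zero, ascPochhammer_natDegree]

theorem neg_le_yDegree (ha : a ∈ component K i) (ha0 : a ≠ 0) : -i ≤ yDegree i a := by
  obtain ⟨f, rfl⟩ := mem_component.1 ha
  have hf : f ≠ 0 := by rintro rfl; simp at ha0
  rw [yDegree_aeval_H_mul_weight hf]
  omega

theorem exists_eq_smul_weight (ha : a ∈ component K i) (h : yDegree i a = (-i).toNat) :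
    ∃ c : K, a = c • weight K i := by
  obtain ⟨f, rfl⟩ := mem_component.1 ha
  rcases eq_or_ne f 0 with rfl | hf
  · exact ⟨0, by simp⟩
  · rw [yDegree_aeval_H_mul_weight hf] at h
    refine ⟨f.coeff 0, ?_⟩
    conv_lhs => rw [eq_C_of_natDegree_eq_zero (p := f) (by omega), aeval_C, ← Algebra.smul_def]

theorem left_ne_zero_of_lie_ne_zero (h : ⁅a, b⁆ ≠ 0) : a ≠ 0 := by
  rintro rfl
  exact h (zero_lie b)

theorem right_ne_zero_of_lie_ne_zero (h : ⁅a, b⁆ ≠ 0) : b ≠ 0 := by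
  rintro rfl
  exact h (lie_zero a)

theorem yDegree_one : yDegree 0 (1 : Weyl K) = 0 := by
  rw [yDegree, symbol_one, Pi.single_eq_same, natDegree_one]

theorem yDegree_eq_of_add_eq_one {u v : Weyl K} (h : u + v = 1) : yDegree 0 u = yDegree 0 v := by
  rw [yDegree, yDegree, eq_sub_of_add_eq h, map_sub, Pi.sub_apply, symbol_one,
    Pi.single_eq_same, natDegree_sub, ← C_1, natDegree_sub_C]

theorem weight_mem_component (i : ℤ) : weight K i ∈ component K i :=
  mem_component.2 ⟨1, by rw [map_one, one_mul]⟩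

theorem yDegree_weight (i : ℤ) : yDegree i (weight K i) = (-i).toNat := by
  simpa using yDegree_aeval_H_mul_weight (K := K) (i := i) one_ne_zero

theorem weight_one : weight K 1 = Wx K := by
  simpa using weight_natCast (K := K) 1

theorem weight_neg_one : weight K (-1) = Wy K := by
  simpa using weight_neg_natCast (K := K) 1

theorem X_mem_component : Wx K ∈ component K 1 :=
  weight_one (K := K) ▸ weight_mem_component 1

theorem Y_mem_component : Wy K ∈ component K (-1) :=
  weight_neg_one (K := K) ▸ weight_mem_component (-1)

theorem yDegree_X : yDegree 1 (Wx K) = 0 := by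
  simpa [weight_one] using yDegree_weight (K := K) 1

theorem yDegree_Y : yDegree (-1) (Wy K) = 1 := by
  simpa [weight_neg_one] using yDegree_weight (K := K) (-1)

theorem mem_adjoin_X_of_yDegree_eq (ha : a ∈ component K i) (h : yDegree i a = 0) :
    a ∈ Algebra.adjoin K {Wx K} := by
  rcases eq_or_ne a 0 with rfl | ha0
  · exact zero_mem _
  have hi := neg_le_yDegree ha ha0
  obtain ⟨c, rfl⟩ := exists_eq_smul_weight ha (by omega)
  lift i to ℕ using by omega
  rw [weight_natCast]
  exact Subalgebra.smul_mem _ (pow_mem (Algebra.self_mem_adjoin_singleton K _) _) c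

theorem mem_adjoin_Y_of_yDegree_eq (ha : a ∈ component K i) (h : (yDegree i a : ℤ) = -i) :
    a ∈ Algebra.adjoin K {Wy K} := by
  obtain ⟨c, rfl⟩ := exists_eq_smul_weight ha (by omega)
  obtain ⟨n, rfl⟩ := Int.exists_eq_neg_ofNat (a := i) (by omega)
  rw [weight_neg_natCast]
  exact Subalgebra.smul_mem _ (pow_mem (Algebra.self_mem_adjoin_singleton K _) _) c

theorem lie_eq_zero_of_mem_adjoin (h : b ∈ Algebra.adjoin K {a}) : ⁅a, b⁆ = 0 :=
  commute_iff_lie_eq.1 (Algebra.commute_of_mem_adjoin_self h)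

theorem mem_adjoin_of_yDegree_zero_eq_zero (ha : a ∈ component K 0) (h : yDegree 0 a = 0)
    (x : Weyl K) : a ∈ Algebra.adjoin K {x} := by
  obtain ⟨c, rfl⟩ := exists_eq_smul_weight ha h
  exact Subalgebra.smul_mem _ (by simp [weight]) c

theorem exists_ne_of_mem_sup {P : Weyl K} (hP : ∃ i j, P ∈ component K i ⊔ component K j) :
    ∃ i j, i ≠ j ∧ ∃ a ∈ component K i, ∃ b ∈ component K j, a + b = P := by
  obtain ⟨i, j, hP⟩ := hP
  rcases eq_or_ne i j with rfl | hij
  · rw [sup_idem] at hP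
    exact ⟨i, i + 1, by omega, P, hP, 0, zero_mem _, add_zero P⟩
  · exact ⟨i, j, hij, Submodule.mem_sup.1 hP⟩

theorem lie_eq_zero_of_mem_component_zero (ha : a ∈ component K 0) (hb : b ∈ component K 0) :
    ⁅a, b⁆ = 0 := by
  refine symbol_injective ?_
  rw [symbol_lie ha hb, map_zero]
  simp [twistedBracket, mul_comm]

end

variable {i j k l : ℤ} {a b c d : Weyl K}

theorem yDegree_lie (ha : a ∈ component K i) (hb : b ∈ component K k) (ha0 : a ≠ 0)
    (hb0 : b ≠ 0) (h : k * yDegree i a ≠ i * yDegree k b) :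
    yDegree (i + k) ⁅a, b⁆ + 1 = yDegree i a + yDegree k b := by
  have hdet : -(i : K) * yDegree k b ≠ -(k : K) * yDegree i a := by
    rw [neg_mul, neg_mul, Ne, neg_inj]
    exact_mod_cast h.symm
  have hpos : yDegree i a + yDegree k b ≠ 0 := by
    intro hsum
    obtain ⟨hqa, hqb⟩ := Nat.add_eq_zero_iff.1 hsum
    simp [hqa, hqb] at h
  rw [yDegree, symbol_lie ha hb, Pi.single_eq_same,
    natDegree_twistedBracket (symbol_ne_zero ha ha0) (symbol_ne_zero hb hb0) hdet]
  exact Nat.sub_add_cancel (Nat.pos_of_ne_zero hpos)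

theorem mul_yDegree_eq_of_lie_eq_zero (ha : a ∈ component K i) (hb : b ∈ component K k)
    (ha0 : a ≠ 0) (hb0 : b ≠ 0) (h : ⁅a, b⁆ = 0) : k * yDegree i a = i * yDegree k b := by
  have hbr : twistedBracket (-(i : K)) (-(k : K)) (symbol a i) (symbol b k) = 0 := by
    simpa [h] using (congrFun (symbol_lie ha hb) (i + k)).symm
  have hdet := mul_natDegree_eq_of_twistedBracket_eq_zero (symbol_ne_zero ha ha0)
    (symbol_ne_zero hb hb0) hbr
  rw [neg_mul, neg_mul, neg_inj] at hdet
  exact_mod_cast hdet.symm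

theorem yDegree_lie_of_neg (ha : a ∈ component K i) (hb : b ∈ component K (-i))
    (h : ⁅a, b⁆ ≠ 0) : yDegree 0 ⁅a, b⁆ + 1 = yDegree i a + yDegree (-i) b := by
  have ha0 := left_ne_zero_of_lie_ne_zero h
  have hb0 := right_ne_zero_of_lie_ne_zero h
  have hi : i ≠ 0 := by
    rintro rfl
    exact h (lie_eq_zero_of_mem_component_zero ha hb)
  have hdet : -i * (yDegree i a : ℤ) ≠ i * yDegree (-i) b := by
    intro heq
    have hsum : (yDegree i a : ℤ) + yDegree (-i) b = 0 :=
      (mul_eq_zero.1 (by linear_combination -heq)).resolve_left hi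
    have := neg_le_yDegree ha ha0
    have := neg_le_yDegree hb hb0
    omega
  rw [← yDegree_lie ha hb ha0 hb0 hdet, add_neg_cancel]

/-- Two commuting elements of the same nonzero weight have the same degree, so subtracting a
multiple of one of them to lower the degree of the other must give zero. -/
theorem exists_eq_smul_of_lie_eq_zero (hi : i ≠ 0) (ha : a ∈ component K i)
    (hb : b ∈ component K i) (ha0 : a ≠ 0) (h : ⁅a, b⁆ = 0) : ∃ c : K, b = c • a := by
  have hlead : (symbol a i).leadingCoeff ≠ 0 := leadingCoeff_ne_zero.2 (symbol_ne_zero ha ha0)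
  set c := (symbol b i).coeff (yDegree i a) / (symbol a i).leadingCoeff with hc
  refine ⟨c, sub_eq_zero.1 (by_contra fun he0 => ?_)⟩
  have he : b - c • a ∈ component K i := sub_mem hb (Submodule.smul_mem _ c ha)
  have hcomm : ⁅a, b - c • a⁆ = 0 := by
    rw [lie_sub, h, lie_smul, lie_self, smul_zero, sub_zero]
  have hdeg : yDegree i a = yDegree i (b - c • a) := by
    exact_mod_cast mul_left_cancel₀ hi (mul_yDegree_eq_of_lie_eq_zero ha he ha0 he0 hcomm)
  refine leadingCoeff_ne_zero.2 (symbol_ne_zero he he0) ?_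
  rw [leadingCoeff, ← yDegree, ← hdeg, map_sub, map_smul, Pi.sub_apply, Pi.smul_apply,
    coeff_sub, coeff_smul, hc, yDegree, coeff_natDegree, smul_eq_mul,
    div_mul_cancel₀ _ hlead, sub_self]

/-! ### Commutators of sums of two homogeneous elements -/

theorem lie_Y_eq_zero_of_lie_Y_eq_lie_X (hb : b ∈ component K j) (hd : d ∈ component K l)
    (hbd : ⁅b, d⁆ = 0) (h : ⁅Wy K, d⁆ = ⁅Wx K, b⁆) : ⁅Wy K, d⁆ = 0 := by
  by_contra hYd
  have hXb : ⁅Wx K, b⁆ ≠ 0 := h ▸ hYd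
  have hb0 := right_ne_zero_of_lie_ne_zero hXb
  have hd0 := right_ne_zero_of_lie_ne_zero hYd
  have hqd : (yDegree l d : ℤ) ≠ -l := fun hqd =>
    hYd (lie_eq_zero_of_mem_adjoin (mem_adjoin_Y_of_yDegree_eq hd hqd))
  have hqb : yDegree j b ≠ 0 := fun hqb =>
    hXb (lie_eq_zero_of_mem_adjoin (mem_adjoin_X_of_yDegree_eq hb hqb))
  have hweight : -1 + l = 1 + j :=
    add_eq_add_of_lie_eq_lie Y_mem_component hd X_mem_component hb h hYd
  have hdegYd := yDegree_lie Y_mem_component hd (left_ne_zero_of_lie_ne_zero hYd) hd0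
    (by rw [yDegree_Y]; omega)
  have hdegXb := yDegree_lie X_mem_component hb (left_ne_zero_of_lie_ne_zero hXb) hb0
    (by rw [yDegree_X]; omega)
  rw [h, hweight, hdegXb, yDegree_X, yDegree_Y] at hdegYd
  have hdet := mul_yDegree_eq_of_lie_eq_zero hb hd hb0 hd0 hbd
  obtain rfl : l = j + 2 := by omega
  have hqbd : (yDegree j b : ℤ) = 1 + yDegree (j + 2) d := by omega
  rw [hqbd] at hdet
  have hj : j = -2 * (yDegree (j + 2) d + 1) := by linear_combination hdet
  have := neg_le_yDegree hd hd0
  omega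

theorem yDegree_eq_neg_of_lie_Y_eq_zero (ha : a ∈ component K i) (ha0 : a ≠ 0)
    (h : ⁅Wy K, a⁆ = 0) : (yDegree i a : ℤ) = -i := by
  have hY0 : Wy K ≠ 0 := left_ne_zero_of_lie_ne_zero (lie_Y_X (K := K) ▸ one_ne_zero)
  have := mul_yDegree_eq_of_lie_eq_zero Y_mem_component ha hY0 ha0 h
  rw [yDegree_Y] at this
  omega

theorem yDegree_eq_zero_of_lie_X_eq_zero (ha : a ∈ component K i) (h : ⁅Wx K, a⁆ = 0) :
    yDegree i a = 0 := by
  rcases eq_or_ne a 0 with rfl | ha0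
  · simp [yDegree]
  have hX0 : Wx K ≠ 0 := right_ne_zero_of_lie_ne_zero (lie_Y_X (K := K) ▸ one_ne_zero)
  have := mul_yDegree_eq_of_lie_eq_zero X_mem_component ha hX0 ha0 h
  rw [yDegree_X] at this
  omega

theorem isCoordinatePair_Y_add_X_add (hb : b ∈ component K j) (hd : d ∈ component K l)
    (hbd : ⁅b, d⁆ = 0) (h : ⁅Wy K, d⁆ = ⁅Wx K, b⁆) :
    IsCoordinatePair (Wy K + b) (Wx K + d) := by
  have hYd := lie_Y_eq_zero_of_lie_Y_eq_lie_X hb hd hbd h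
  have hqb := yDegree_eq_zero_of_lie_X_eq_zero hb (h ▸ hYd)
  have hbX := mem_adjoin_X_of_yDegree_eq hb hqb
  rcases eq_or_ne d 0 with rfl | hd0
  · simpa only [add_zero] using IsCoordinatePair.Y_X.add_left hbX
  have hqd := yDegree_eq_neg_of_lie_Y_eq_zero hd hd0 hYd
  have hdY := mem_adjoin_Y_of_yDegree_eq hd hqd
  rcases eq_or_ne b 0 with rfl | hb0
  · simpa only [add_zero] using IsCoordinatePair.Y_X.add_right hdY
  have hjl : j * l = 0 := by
    have hdet := mul_yDegree_eq_of_lie_eq_zero hb hd hb0 hd0 hbd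
    rw [hqb, hqd] at hdet
    linear_combination hdet
  rcases mul_eq_zero.1 hjl with rfl | rfl
  · exact (IsCoordinatePair.Y_X.add_right hdY).add_left
      (mem_adjoin_of_yDegree_zero_eq_zero hb hqb _)
  · exact (IsCoordinatePair.Y_X.add_left hbX).add_right
      (mem_adjoin_of_yDegree_zero_eq_zero hd (by omega) _)

theorem exists_eq_smul_Y_X_of_lie_eq_one (hi : i < 0) (ha : a ∈ component K i)
    (hc : c ∈ component K (-i)) (h : ⁅a, c⁆ = 1) :
    ∃ α β : K, α * β = 1 ∧ a = α • Wy K ∧ c = β • Wx K := by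
  have hlie : ⁅a, c⁆ ≠ 0 := h ▸ one_ne_zero
  have hdeg := yDegree_lie_of_neg ha hc hlie
  have hqa := neg_le_yDegree ha (left_ne_zero_of_lie_ne_zero hlie)
  rw [h, yDegree_one] at hdeg
  obtain rfl : i = -1 := by omega
  obtain ⟨α, rfl⟩ := exists_eq_smul_weight ha (by omega)
  obtain ⟨β, rfl⟩ := exists_eq_smul_weight hc (by omega)
  rw [neg_neg, weight_one, weight_neg_one] at h ⊢
  rw [smul_lie, lie_smul, lie_Y_X, smul_smul] at h
  exact ⟨α, β, smul_left_injective K (one_ne_zero (α := Weyl K)) (by simpa using h), rfl, rfl⟩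

theorem isCoordinatePair_add_add_of_neg (hi : i < 0) (ha : a ∈ component K i)
    (hb : b ∈ component K j) (hc : c ∈ component K (-i)) (hd : d ∈ component K l)
    (hac : ⁅a, c⁆ = 1) (hbd : ⁅b, d⁆ = 0) (h : ⁅a, d⁆ = ⁅c, b⁆) :
    IsCoordinatePair (a + b) (c + d) := by
  obtain ⟨α, β, hαβ, rfl, rfl⟩ := exists_eq_smul_Y_X_of_lie_eq_one hi ha hc hac
  have hpair : IsCoordinatePair (Wy K + β • b) (Wx K + α • d) :=
    isCoordinatePair_Y_add_X_add (Submodule.smul_mem _ β hb) (Submodule.smul_mem _ α hd)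
      (by rw [smul_lie, lie_smul, hbd, smul_zero, smul_zero])
      (by rw [lie_smul, lie_smul, ← smul_lie, ← smul_lie, h])
  simpa only [smul_add, smul_smul, hαβ, mul_comm β, one_smul] using hpair.smul hαβ

theorem isCoordinatePair_add_add (ha : a ∈ component K i) (hb : b ∈ component K j)
    (hc : c ∈ component K k) (hd : d ∈ component K l) (hac : ⁅a, c⁆ = 1) (hbd : ⁅b, d⁆ = 0)
    (h : ⁅a, d⁆ = ⁅c, b⁆) : IsCoordinatePair (a + b) (c + d) := by
  obtain rfl : k = -i := by
    have := add_eq_zero_of_lie_add_lie_eq_one ha hb hc hd (by rw [hac, hbd, add_zero])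
      (hac ▸ one_ne_zero)
    omega
  rcases lt_trichotomy i 0 with hi | rfl | hi
  · exact isCoordinatePair_add_add_of_neg hi ha hb hc hd hac hbd h
  · exact absurd (hac ▸ lie_eq_zero_of_mem_component_zero ha hc) one_ne_zero
  · rw [← IsCoordinatePair.rotate_iff, neg_add]
    refine isCoordinatePair_add_add_of_neg (neg_neg_of_pos hi) hc hd
      (by rw [neg_neg]; exact neg_mem ha) (neg_mem hb) ?_ ?_ ?_
    · rw [lie_neg, lie_skew, hac]
    · rw [lie_neg, lie_skew, hbd]
    · rw [lie_neg, neg_lie, h]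

theorem eq_neg_of_lie_add_lie_eq_one (ha : a ∈ component K i) (hb : b ∈ component K j)
    (hc : c ∈ component K (-i)) (hd : d ∈ component K (-j))
    (h : ⁅a, c⁆ + ⁅b, d⁆ = 1) (hac : ⁅a, c⁆ ≠ 0) (hbd : ⁅b, d⁆ ≠ 0) (had : ⁅a, d⁆ = 0)
    (hbc : ⁅b, c⁆ = 0) : j = -i := by
  have hdegac := yDegree_lie_of_neg ha hc hac
  have hdegbd := yDegree_lie_of_neg hb hd hbd
  have hdeg := yDegree_eq_of_add_eq_one h
  have hdetad := mul_yDegree_eq_of_lie_eq_zero ha hd (left_ne_zero_of_lie_ne_zero hac)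
    (right_ne_zero_of_lie_ne_zero hbd) had
  have hdetbc := mul_yDegree_eq_of_lie_eq_zero hb hc (left_ne_zero_of_lie_ne_zero hbd)
    (right_ne_zero_of_lie_ne_zero hac) hbc
  have hsum : (yDegree i a + yDegree (-i) c : ℤ) = yDegree j b + yDegree (-j) d := by omega
  have hprod : (i + j) * (yDegree i a + yDegree (-i) c : ℤ) = 0 := by
    linear_combination i * hsum - hdetad - hdetbc
  have := (mul_eq_zero.1 hprod).resolve_right (by omega)
  omega

theorem isCoordinatePair_add_add_of_lie_ne_zero (hij : i ≠ j) (ha : a ∈ component K i)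
    (hb : b ∈ component K j) (hc : c ∈ component K k) (hd : d ∈ component K l)
    (h : ⁅a, c⁆ + ⁅b, d⁆ = 1) (hac : ⁅a, c⁆ ≠ 0) (hbd : ⁅b, d⁆ ≠ 0)
    (hcross : ⁅a, d⁆ + ⁅b, c⁆ = 0) : IsCoordinatePair (a + b) (c + d) := by
  obtain rfl : k = -i := by
    have := add_eq_zero_of_lie_add_lie_eq_one ha hb hc hd h hac
    omega
  obtain rfl : l = -j := by
    have := add_eq_zero_of_lie_add_lie_eq_one hb ha hd hc (add_comm _ _ |>.trans h) hbd
    omega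
  have had : ⁅a, d⁆ = 0 := eq_zero_of_add_eq_zero hcross fun n => by
    rcases eq_or_ne n (i + -j) with rfl | hn
    · exact .inr (symbol_lie_of_ne hb hc (by omega))
    · exact .inl (symbol_lie_of_ne ha hd hn)
  have hbc : ⁅b, c⁆ = 0 := by rwa [had, zero_add] at hcross
  obtain rfl := eq_neg_of_lie_add_lie_eq_one ha hb hc hd h hac hbd had hbc
  rw [neg_neg] at hd
  obtain ⟨r, rfl⟩ := exists_eq_smul_of_lie_eq_zero (by omega) ha hd
    (left_ne_zero_of_lie_ne_zero hac) had
  have hpair : IsCoordinatePair (a + b) (c - r • b + 0) :=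
    isCoordinatePair_add_add ha hb (sub_mem hc (Submodule.smul_mem _ r hb))
      (zero_mem (component K 0))
      (by rw [lie_sub, lie_smul, ← lie_skew a b, smul_neg, sub_neg_eq_add, ← lie_smul, h])
      (lie_zero b)
      (by rw [lie_zero, sub_lie, smul_lie, lie_self, smul_zero, sub_zero, ← lie_skew, hbc,
        neg_zero])
  have hshear := hpair.add_right (x := r • (a + b))
    (Subalgebra.smul_mem _ (Algebra.self_mem_adjoin_singleton K _) r)
  rwa [show c - r • b + 0 + r • (a + b) = c + r • a by rw [smul_add]; abel] at hshear

theorem isCoordinatePair_of_lie_add_lie_eq_one (hij : i ≠ j) (ha : a ∈ component K i)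
    (hb : b ∈ component K j) (hc : c ∈ component K k) (hd : d ∈ component K l)
    (h : ⁅a, c⁆ + ⁅b, d⁆ = 1) (hcross : ⁅a, d⁆ + ⁅b, c⁆ = 0) :
    IsCoordinatePair (a + b) (c + d) := by
  by_cases hbd : ⁅b, d⁆ = 0
  · refine isCoordinatePair_add_add ha hb hc hd (by rwa [hbd, add_zero] at h) hbd ?_
    rw [eq_neg_of_add_eq_zero_left hcross, lie_skew]
  by_cases hac : ⁅a, c⁆ = 0
  · rw [add_comm a, add_comm c]
    refine isCoordinatePair_add_add hb ha hd hc (by rwa [hac, zero_add] at h) hac ?_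
    rw [eq_neg_of_add_eq_zero_right hcross, lie_skew]
  exact isCoordinatePair_add_add_of_lie_ne_zero hij ha hb hc hd h hac hbd hcross

end Weyl

variable (K)

/-- **Theorem 1 (Bavula–Levandovskyy).** If `P, Q` in the first Weyl algebra are sums of at
most two homogeneous components and `[P,Q] = 1`, then `P = τ(Y)`, `Q = τ(X)` for some
`K`-algebra automorphism `τ` of `A₁`. -/
theorem dixmier_mass_le_two
    (P Q : Weyl K)
    (hP : ∃ i j : ℤ, P ∈ component K i ⊔ component K j)
    (hQ : ∃ i j : ℤ, Q ∈ component K i ⊔ component K j)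
    (hPQ : P * Q - Q * P = 1) :
    ∃ τ : Weyl K ≃ₐ[K] Weyl K, P = τ (Wy K) ∧ Q = τ (Wx K) := by
  obtain ⟨i, j, hij, a, ha, b, hb, rfl⟩ := Weyl.exists_ne_of_mem_sup hP
  obtain ⟨k, l, hkl, c, hc, d, hd, rfl⟩ := Weyl.exists_ne_of_mem_sup hQ
  change Weyl.IsCoordinatePair (a + b) (c + d)
  have hsum : (⁅a, c⁆ + ⁅b, d⁆) + (⁅a, d⁆ + ⁅b, c⁆) = 1 := by
    have hlie : ⁅a + b, c + d⁆ = 1 := hPQ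
    rw [← hlie, add_lie, lie_add, lie_add]
    abel
  rcases Weyl.eq_zero_or_eq_zero_of_add_eq_one hsum
    (Weyl.symbol_lie_add_lie_eq_zero_or hij hkl ha hb hc hd) with hdiag | hcross
  · rw [add_comm c]
    exact Weyl.isCoordinatePair_of_lie_add_lie_eq_one hij ha hb hd hc
      (by rwa [hdiag, zero_add] at hsum) hdiag
  · exact Weyl.isCoordinatePair_of_lie_add_lie_eq_one hij ha hb hc hd
      (by rwa [hcross, add_zero] at hsum) hcross
end
end

section
/- Let A₁ be the first Weyl algebra over a field K of characteristic zero, with H = YX. For every integer p ≥ 2 and all nonzero polynomials α, β ∈ K[H], the elements P = αX^p and Q = βY^p satisfy [P,Q] ≠ 1. Equivalently, there are no homogeneous elements P ∈ A_{1,p}, Q ∈ A_{1,−p} with p ≥ 2 and [P,Q] = 1. -/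
open Polynomial

noncomputable section

variable (K : Type) [Field K] [CharZero K]

/-!
Let `X` act on `K[t]` by `f(t) ↦ f(t - 1)` and `Y` by `f(t) ↦ t f(t + 1)`, so that `H = YX` acts as
multiplication by `t` and `Y ^ p` as `f(t) ↦ t(t + 1)⋯(t + p - 1) f(t + p)`. Applying `[P, Q] = 1`
to the constant polynomial `1` gives `G(t) - G(t + p) = 1`, where
`G(t) = α(t) β(t - p) (t - p)(t - p + 1)⋯(t - 1)`. In characteristic zero a polynomial whose forward
difference is constant has degree at most `1`, whereas `G` is nonzero and has a factor of degree
`p ≥ 2`.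
-/

section CommSemiring

variable {R : Type*} [CommSemiring R]

lemma taylor_pow_apply (r : R) (n : ℕ) (f : R[X]) :
    (taylor r ^ n : Module.End R R[X]) f = taylor (n * r) f := by
  induction n with
  | zero => simp
  | succ n ih => rw [pow_succ', Module.End.mul_apply, ih, taylor_taylor, Nat.cast_succ]; ring_nf

lemma eval_natCast_mul_of_taylor_eq_self {r : R} {f : R[X]} (hf : taylor r f = f) (n : ℕ) :
    f.eval (n * r) = f.eval 0 := by
  induction n with
  | zero => simp
  | succ n ih => rw [Nat.cast_succ, add_one_mul, ← taylor_eval, hf, ih]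

end CommSemiring

section CommRing

variable {R : Type*} [CommRing R]

lemma mulLeft_X_mul_taylor_mul_taylor_neg (r : R) :
    LinearMap.mulLeft R X * taylor r * taylor (-r) =
      taylor (-r) * (LinearMap.mulLeft R X * taylor r) + r • (1 : Module.End R R[X]) := by
  refine LinearMap.ext fun f => ?_
  simp only [LinearMap.add_apply, LinearMap.smul_apply, Module.End.mul_apply, Module.End.one_apply,
    LinearMap.mulLeft_apply, taylor_mul, taylor_X, taylor_taylor, add_neg_cancel, neg_add_cancel,
    taylor_zero, smul_eq_C_mul, C_neg]
  ring

variable [IsDomain R] [CharZero R]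

lemma eq_C_of_taylor_eq_self {r : R} (hr : r ≠ 0) {f : R[X]} (hf : taylor r f = f) :
    f = C (f.eval 0) := by
  have multiples_injective : Function.Injective fun n : ℕ => (n : R) * r :=
    (mul_left_injective₀ hr).comp Nat.cast_injective
  refine eq_of_infinite_eval_eq _ _ ((Set.infinite_range_of_injective multiples_injective).mono ?_)
  rintro _ ⟨n, rfl⟩
  simp [eval_natCast_mul_of_taylor_eq_self hf n]

lemma natDegree_le_one_of_taylor_sub_self_eq_C {r : R} (hr : r ≠ 0) {c : R} {f : R[X]}
    (hf : taylor r f - f = C c) : f.natDegree ≤ 1 := by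
  -- Subtracting the linear solution `(c / r) X`, with denominators cleared, leaves a periodic one.
  have periodic : taylor r (C r * f - C c * X) = C r * f - C c * X := by
    rw [map_sub, taylor_mul, taylor_mul, taylor_C, taylor_C, taylor_X, sub_eq_iff_eq_add.mp hf]
    ring
  obtain ⟨d, hd⟩ : ∃ d, C r * f - C c * X = C d := ⟨_, eq_C_of_taylor_eq_self hr periodic⟩
  rw [← natDegree_C_mul hr, sub_eq_iff_eq_add'.mp hd]
  exact natDegree_linear_le

lemma mul_taylor_neg_sub_mul_taylor_ne_C {r : R} (hr : r ≠ 0) {c : R} (hc : c ≠ 0) (f : R[X])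
    {g : R[X]} (hg : 2 ≤ g.natDegree) :
    f * taylor (-r) g - g * taylor r f ≠ C c := by
  intro h
  set G := f * taylor (-r) g with hG
  have taylor_G : taylor r G = g * taylor r f := by
    rw [hG, taylor_mul, taylor_taylor, add_neg_cancel, taylor_zero, mul_comm]
  have G_ne_zero : G ≠ 0 := by
    intro hG0
    rw [← taylor_G, hG0, map_zero, sub_zero, eq_comm, C_eq_zero] at h
    exact hc h
  have natDegree_G_le : G.natDegree ≤ 1 :=
    natDegree_le_one_of_taylor_sub_self_eq_C hr (c := -c) (by rw [taylor_G, C_neg, ← h, neg_sub])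
  have natDegree_g_le : g.natDegree ≤ G.natDegree :=
    natDegree_taylor g (-r) ▸ natDegree_le_of_dvd (dvd_mul_left _ _) G_ne_zero
  omega

end CommRing

section WeylAlgebra

variable (F : Type) [Field F]

/-- The representation of the Weyl algebra on polynomials by difference operators, in which `X` is
the shift `f(t) ↦ f(t - 1)` and `Y` is `f(t) ↦ t f(t + 1)`. It is chosen so that `H = YX` acts as
multiplication by `t`. -/
def weylRep : Weyl F →ₐ[F] Module.End F F[X] :=
  RingQuot.liftAlgHom F
    ⟨FreeAlgebra.lift F fun b => if b then taylor (-1) else LinearMap.mulLeft F X * taylor 1, by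
      rintro _ _ ⟨⟩
      simpa using mulLeft_X_mul_taylor_mul_taylor_neg (1 : F)⟩

lemma weylRep_Wx : weylRep F (Wx F) = taylor (-1) := by
  simp [weylRep, Wx]

lemma weylRep_Wy : weylRep F (Wy F) = LinearMap.mulLeft F X * taylor 1 := by
  simp [weylRep, Wy]

lemma weylRep_WH : weylRep F (WH F) = Algebra.lmul F F[X] X := by
  refine LinearMap.ext fun f => ?_
  simp [WH, weylRep_Wx, weylRep_Wy, taylor_taylor]

lemma weylRep_aeval_WH_apply (a f : F[X]) : weylRep F (aeval (WH F) a) f = a * f := by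
  rw [← aeval_algHom_apply, weylRep_WH, aeval_algHom_apply, aeval_X_left_apply,
    Algebra.coe_lmul_eq_mul, LinearMap.mul_apply']

lemma weylRep_Wx_pow_apply (n : ℕ) (f : F[X]) :
    weylRep F (Wx F ^ n) f = taylor (-n : F) f := by
  rw [map_pow, weylRep_Wx, taylor_pow_apply, mul_neg_one]

lemma weylRep_Wy_pow_apply (n : ℕ) (f : F[X]) :
    weylRep F (Wy F ^ n) f = ascPochhammer F n * taylor (n : F) f := by
  induction n with
  | zero => simp
  | succ n ih =>
    calc weylRep F (Wy F ^ (n + 1)) f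
        = X * taylor 1 (ascPochhammer F n * taylor (n : F) f) := by
          rw [pow_succ', map_mul, Module.End.mul_apply, ih, weylRep_Wy, Module.End.mul_apply,
            LinearMap.mulLeft_apply]
      _ = X * taylor 1 (ascPochhammer F n) * taylor ((n + 1 : ℕ) : F) f := by
          rw [taylor_mul, taylor_taylor, mul_assoc, Nat.cast_succ, add_comm]
      _ = ascPochhammer F (n + 1) * taylor ((n + 1 : ℕ) : F) f := by
          rw [ascPochhammer_succ_left, taylor_apply 1, C_1]

lemma weylRep_commutator_apply_one (p : ℕ) (α β : F[X]) :
    weylRep F ((aeval (WH F) α * Wx F ^ p) * (aeval (WH F) β * Wy F ^ p) -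
        (aeval (WH F) β * Wy F ^ p) * (aeval (WH F) α * Wx F ^ p)) 1 =
      α * taylor (-p : F) (β * ascPochhammer F p) -
        β * ascPochhammer F p * taylor (p : F) α := by
  simp only [map_sub, map_mul, LinearMap.sub_apply, Module.End.mul_apply, weylRep_aeval_WH_apply,
    weylRep_Wx_pow_apply, weylRep_Wy_pow_apply, taylor_one, C_1, mul_one, mul_assoc]

lemma mem_component_natCast {p : ℕ} {P : Weyl F} :
    P ∈ component F p ↔ ∃ α : F[X], aeval (WH F) α * Wx F ^ p = P := by
  simp [component, weight]

lemma mem_component_neg_natCast {p : ℕ} {Q : Weyl F} :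
    Q ∈ component F (-p) ↔ ∃ β : F[X], aeval (WH F) β * Wy F ^ p = Q := by
  rcases p.eq_zero_or_pos with rfl | hp
  · simp [component, weight]
  · simp [component, weight, hp.ne']

end WeylAlgebra

lemma commutator_aeval_mul_pow_ne_one {p : ℕ} (hp : 2 ≤ p) (α β : K[X]) :
    (aeval (WH K) α * Wx K ^ p) * (aeval (WH K) β * Wy K ^ p) -
      (aeval (WH K) β * Wy K ^ p) * (aeval (WH K) α * Wx K ^ p) ≠ 1 := by
  intro h
  have polynomial_identity := weylRep_commutator_apply_one K p α β
  rw [h, map_one (weylRep K), Module.End.one_apply] at polynomial_identity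
  have hβ : β ≠ 0 := by
    rintro rfl
    simp at polynomial_identity
  have natDegree_ge : 2 ≤ (β * ascPochhammer K p).natDegree := by
    rw [natDegree_mul hβ (monic_ascPochhammer K p).ne_zero, ascPochhammer_natDegree]
    omega
  exact mul_taylor_neg_sub_mul_taylor_ne_C (Nat.cast_ne_zero.mpr (by omega)) one_ne_zero α
    natDegree_ge (polynomial_identity.symm.trans C_1.symm)

/-- **Step (ii) of the proof.** For `p ≥ 2` and nonzero `α, β ∈ K[H]`, the elements
`P = αX^p` and `Q = βY^p` never satisfy `[P,Q] = 1`; equivalently, there are no homogeneous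
`P ∈ A_{1,p}`, `Q ∈ A_{1,−p}` with `p ≥ 2` and `[P,Q] = 1`. -/
theorem no_homogeneous_pair (p : ℕ) (hp : 2 ≤ p) :
    (∀ α β : Polynomial K, α ≠ 0 → β ≠ 0 →
      (Polynomial.aeval (WH K) α * Wx K ^ p) * (Polynomial.aeval (WH K) β * Wy K ^ p) -
        (Polynomial.aeval (WH K) β * Wy K ^ p) * (Polynomial.aeval (WH K) α * Wx K ^ p) ≠ 1) ∧
    (∀ P ∈ component K (p : ℤ), ∀ Q ∈ component K (-(p : ℤ)), P * Q - Q * P ≠ 1) := by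
  refine ⟨fun α β _ _ => commutator_aeval_mul_pow_ne_one K hp α β, fun P hP Q hQ => ?_⟩
  obtain ⟨α, rfl⟩ := (mem_component_natCast K).mp hP
  obtain ⟨β, rfl⟩ := (mem_component_neg_natCast K).mp hQ
  exact commutator_aeval_mul_pow_ne_one K hp α β
end
end

section
/- Let A₁ be the first Weyl algebra over a field K of characteristic zero, with H = YX, and let σ be the automorphism of K[H] with σ(H) = H − 1. For every integer p ≥ 1 and all α, β ∈ K[H], the commutator satisfies [αX^p, βY^p] = (1 − σ^{−p})(α·σ^p(β)·(p,−p)), where (p,−p) = (H−p)(H−p+1)⋯(H−1). -/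
open Polynomial

noncomputable section

variable (K : Type) [Field K] [CharZero K]

/-!
`K[H]` together with `X` and `Y` satisfies the relations `X d = σ(d) X`, `Y d = σ⁻¹(d) Y`,
`Y X = a`, `X Y = σ(a)` of a generalized Weyl algebra, with `a = H`. These relations alone give
`X^p Y^p = σ(a) ⋯ σ^p(a)` and `Y^p X^p = σ^{-p}(X^p Y^p)`. Moving coefficients to the left in the
two products of the commutator, one finds `c = α σ^p(β) σ(a) ⋯ σ^p(a)` for the first and
`σ^{-p}(c)` for the second.
-/

section Semiconj

variable {R A : Type*} [CommSemiring R] [Semiring A] [Algebra R A]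

theorem semiconjBy_pow_algHom {D : Type*} [Semiring D] [Algebra R D] {ι : D →ₐ[R] A}
    {τ : D ≃ₐ[R] D} {z : A} (h : ∀ d, SemiconjBy z (ι d) (ι (τ d))) (n : ℕ) (d : D) :
    SemiconjBy (z ^ n) (ι d) (ι ((τ ^ n) d)) := by
  induction n with
  | zero => simp
  | succ n ih =>
    rw [pow_succ', pow_succ']
    exact (h _).mul_left ih

theorem semiconjBy_polynomial_algHom {φ ψ : R[X] →ₐ[R] A} {z : A}
    (h : SemiconjBy z (φ X) (ψ X)) (f : R[X]) : SemiconjBy z (φ f) (ψ f) := by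
  induction f using Polynomial.induction_on' with
  | add f g hf hg =>
    rw [map_add, map_add]
    exact hf.add_right hg
  | monomial n r =>
    rw [← smul_X_eq_monomial, map_smul, map_smul, map_pow, map_pow, SemiconjBy,
      mul_smul_comm, smul_mul_assoc, (h.pow_right n).eq]

end Semiconj

section WeylPair

variable {A : Type*} [Ring A] {x y : A}

theorem semiconjBy_mul_self_sub_one (hyx : y * x = x * y + 1) :
    SemiconjBy x (y * x) (y * x - 1) :=
  calc x * (y * x) = (x * y) * x := (mul_assoc x y x).symm
    _ = (y * x - 1) * x := by rw [hyx, add_sub_cancel_right]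

theorem semiconjBy_mul_self_add_one (hyx : y * x = x * y + 1) :
    SemiconjBy y (y * x) (y * x + 1) :=
  calc y * (y * x) = y * (x * y + 1) := by rw [hyx]
    _ = (y * x + 1) * y := by noncomm_ring

end WeylPair

/-- The defining relations of the generalized Weyl algebra `D(σ, a)` of degree one, for elements
`x`, `y` of an algebra `A` that receives the coefficient ring `D` through `ι`. -/
structure GeneralizedWeylRelations {R D A : Type*} [CommSemiring R] [CommRing D] [Algebra R D]
    [Ring A] [Algebra R A] (σ : D ≃ₐ[R] D) (a : D) (ι : D →ₐ[R] A) (x y : A) : Prop where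
  semiconjBy_x : ∀ d, SemiconjBy x (ι d) (ι (σ d))
  semiconjBy_y : ∀ d, SemiconjBy y (ι d) (ι (σ⁻¹ d))
  y_mul_x : y * x = ι a
  x_mul_y : x * y = ι (σ a)

namespace GeneralizedWeylRelations

variable {R D A : Type*} [CommSemiring R] [CommRing D] [Algebra R D] [Ring A] [Algebra R A]
  {σ : D ≃ₐ[R] D} {a : D} {ι : D →ₐ[R] A} {x y : A}

theorem semiconjBy_x_pow (h : GeneralizedWeylRelations σ a ι x y) (n : ℕ) (d : D) :
    SemiconjBy (x ^ n) (ι d) (ι ((σ ^ n) d)) :=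
  semiconjBy_pow_algHom h.semiconjBy_x n d

theorem semiconjBy_y_pow (h : GeneralizedWeylRelations σ a ι x y) (n : ℕ) (d : D) :
    SemiconjBy (y ^ n) (ι d) (ι ((σ ^ n)⁻¹ d)) :=
  inv_pow σ n ▸ semiconjBy_pow_algHom h.semiconjBy_y n d

theorem x_pow_mul_y_pow (h : GeneralizedWeylRelations σ a ι x y) (n : ℕ) :
    x ^ n * y ^ n = ι (∏ k ∈ Finset.range n, (σ ^ (k + 1)) a) := by
  induction n with
  | zero => simp
  | succ n ih =>
    calc x ^ (n + 1) * y ^ (n + 1) = x ^ n * (x * y) * y ^ n := by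
          rw [pow_succ, pow_succ']; noncomm_ring
      _ = ι ((σ ^ (n + 1)) a) * (x ^ n * y ^ n) := by
          rw [h.x_mul_y, (h.semiconjBy_x_pow n (σ a)).eq, mul_assoc, pow_succ σ, AlgEquiv.mul_apply]
      _ = ι (∏ k ∈ Finset.range (n + 1), (σ ^ (k + 1)) a) := by
          rw [ih, ← map_mul, Finset.prod_range_succ_comm]

theorem y_pow_mul_x_pow (h : GeneralizedWeylRelations σ a ι x y) (n : ℕ) :
    y ^ n * x ^ n = ι ((σ ^ n)⁻¹ (∏ k ∈ Finset.range n, (σ ^ (k + 1)) a)) := by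
  induction n with
  | zero => simp
  | succ n ih =>
    set P := ∏ k ∈ Finset.range n, (σ ^ (k + 1)) a
    have inv_pow_succ_apply : (σ ^ (n + 1))⁻¹ P = σ⁻¹ ((σ ^ n)⁻¹ P) := by
      rw [pow_succ, mul_inv_rev, AlgEquiv.mul_apply]
    have inv_apply_self : (σ ^ (n + 1))⁻¹ ((σ ^ (n + 1)) a) = a :=
      (σ ^ (n + 1)).symm_apply_apply a
    calc y ^ (n + 1) * x ^ (n + 1) = y * (y ^ n * x ^ n) * x := by
          rw [pow_succ', pow_succ]; noncomm_ring
      _ = ι (σ⁻¹ ((σ ^ n)⁻¹ P)) * ι a := by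
          rw [ih, (h.semiconjBy_y _).eq, mul_assoc, h.y_mul_x]
      _ = ι ((σ ^ (n + 1))⁻¹ (P * (σ ^ (n + 1)) a)) := by
          rw [map_mul (σ ^ (n + 1))⁻¹, inv_pow_succ_apply, inv_apply_self, map_mul]
      _ = ι ((σ ^ (n + 1))⁻¹ (∏ k ∈ Finset.range (n + 1), (σ ^ (k + 1)) a)) := by
          rw [Finset.prod_range_succ]

theorem mul_x_pow_mul_mul_y_pow (h : GeneralizedWeylRelations σ a ι x y) (n : ℕ) (α β : D) :
    ι α * x ^ n * (ι β * y ^ n) =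
      ι (α * (σ ^ n) β * ∏ k ∈ Finset.range n, (σ ^ (k + 1)) a) :=
  calc ι α * x ^ n * (ι β * y ^ n) = ι α * (x ^ n * ι β) * y ^ n := by noncomm_ring
    _ = ι α * ι ((σ ^ n) β) * (x ^ n * y ^ n) := by
        rw [(h.semiconjBy_x_pow n β).eq]; noncomm_ring
    _ = _ := by rw [h.x_pow_mul_y_pow, ← map_mul, ← map_mul]

theorem mul_y_pow_mul_mul_x_pow (h : GeneralizedWeylRelations σ a ι x y) (n : ℕ) (α β : D) :
    ι β * y ^ n * (ι α * x ^ n) =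
      ι ((σ ^ n)⁻¹ (α * (σ ^ n) β * ∏ k ∈ Finset.range n, (σ ^ (k + 1)) a)) :=
  calc ι β * y ^ n * (ι α * x ^ n) = ι β * (y ^ n * ι α) * x ^ n := by noncomm_ring
    _ = ι β * ι ((σ ^ n)⁻¹ α) * (y ^ n * x ^ n) := by
        rw [(h.semiconjBy_y_pow n α).eq]; noncomm_ring
    _ = ι ((σ ^ n)⁻¹ α * β * (σ ^ n)⁻¹ (∏ k ∈ Finset.range n, (σ ^ (k + 1)) a)) := by
        rw [h.y_pow_mul_x_pow, ← map_mul, ← map_mul, mul_comm β]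
    _ = _ := by
        have inv_apply_self : (σ ^ n)⁻¹ ((σ ^ n) β) = β := (σ ^ n).symm_apply_apply β
        rw [map_mul (σ ^ n)⁻¹, map_mul (σ ^ n)⁻¹, inv_apply_self]

end GeneralizedWeylRelations

section Translation

variable {R : Type*} [CommRing R] {σ : R[X] ≃ₐ[R] R[X]}

theorem pow_apply_X_of_apply_X_eq_sub_one (hσ : σ X = X - C 1) (n : ℕ) :
    (σ ^ n) X = X - C (n : R) := by
  induction n with
  | zero => simp
  | succ n ih =>
    rw [pow_succ, AlgEquiv.mul_apply, hσ, map_sub, ih, Nat.cast_succ, C_add, C_1, map_one]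
    ring

theorem inv_apply_X_of_apply_X_eq_sub_one (hσ : σ X = X - C 1) : σ⁻¹ X = X + C 1 := by
  have apply_add_one : σ (X + C 1) = X := by rw [map_add, hσ, C_1, map_one, sub_add_cancel]
  exact σ.symm_apply_eq.mpr apply_add_one.symm

theorem generalizedWeylRelations_of_mul_eq_mul_add_one {A : Type*} [Ring A] [Algebra R A]
    (hσ : σ X = X - C 1) {x y : A} (hyx : y * x = x * y + 1) :
    GeneralizedWeylRelations σ X (aeval (y * x)) x y where
  semiconjBy_x := semiconjBy_polynomial_algHom (ψ := (aeval (y * x)).comp σ.toAlgHom) <| by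
    simpa [hσ] using semiconjBy_mul_self_sub_one hyx
  semiconjBy_y := semiconjBy_polynomial_algHom (ψ := (aeval (y * x)).comp σ⁻¹.toAlgHom) <| by
    simpa [← AlgEquiv.aut_inv, inv_apply_X_of_apply_X_eq_sub_one hσ] using
      semiconjBy_mul_self_add_one hyx
  y_mul_x := (aeval_X _).symm
  x_mul_y := by simp [hσ, hyx]

end Translation

theorem commutator_formula_general {R A : Type*} [CommRing R] [Ring A] [Algebra R A]
    (σ : R[X] ≃ₐ[R] R[X]) (hσ : σ X = X - C 1) {x y : A} (hyx : y * x = x * y + 1)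
    (p : ℕ) (α β : R[X]) :
    (aeval (y * x) α * x ^ p) * (aeval (y * x) β * y ^ p) -
      (aeval (y * x) β * y ^ p) * (aeval (y * x) α * x ^ p) =
    aeval (y * x)
      (α * (σ ^ p) β * ∏ k ∈ Finset.range p, (X - C ((k : R) + 1)) -
        (σ ^ (-(p : ℤ))) (α * (σ ^ p) β * ∏ k ∈ Finset.range p, (X - C ((k : R) + 1)))) := by
  have relations := generalizedWeylRelations_of_mul_eq_mul_add_one hσ hyx
  have prod_eq : ∏ k ∈ Finset.range p, (σ ^ (k + 1)) X =
      ∏ k ∈ Finset.range p, (X - C ((k : R) + 1)) :=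
    Finset.prod_congr rfl fun k _ => by
      rw [pow_apply_X_of_apply_X_eq_sub_one hσ, Nat.cast_succ]
  rw [relations.mul_x_pow_mul_mul_y_pow, relations.mul_y_pow_mul_mul_x_pow, prod_eq, ← map_sub,
    zpow_neg, zpow_natCast]

theorem Wy_mul_Wx (F : Type) [Field F] : Wy F * Wx F = Wx F * Wy F + 1 := by
  simpa only [Wx, Wy, map_mul, map_add, map_one] using
    RingQuot.mkAlgHom_rel F (WeylRel.comm (K := F))

/-- **Commutator formula.** For `σ(H) = H − 1`, `p ≥ 1` and `α, β ∈ K[H]`: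
`[αX^p, βY^p] = (1 − σ^{−p})(α·σ^p(β)·(p,−p))`, where `(p,−p) = (H−p)(H−p+1)⋯(H−1)`. -/
theorem commutator_formula (σ : Polynomial K ≃ₐ[K] Polynomial K)
    (hσ : σ Polynomial.X = Polynomial.X - Polynomial.C 1)
    (p : ℕ) (hp : 1 ≤ p) (α β : Polynomial K) :
    (Polynomial.aeval (WH K) α * Wx K ^ p) * (Polynomial.aeval (WH K) β * Wy K ^ p) -
      (Polynomial.aeval (WH K) β * Wy K ^ p) * (Polynomial.aeval (WH K) α * Wx K ^ p) =
    Polynomial.aeval (WH K)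
      (α * (σ ^ p) β * ∏ k ∈ Finset.range p, (Polynomial.X - Polynomial.C ((k : K) + 1)) -
        (σ ^ (-(p : ℤ)))
          (α * (σ ^ p) β * ∏ k ∈ Finset.range p, (Polynomial.X - Polynomial.C ((k : K) + 1)))) :=
  commutator_formula_general σ hσ (Wy_mul_Wx K) p α β
end
end
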